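/- Let ψ be a satisfiable set of assignments over a finite type V of propositional variables, and let Υ_ψ be the set of all variables that are dispensable w.r.t. ψ. Then Υ_ψ is deselectable w.r.t. ψ, i.e., there is a model of ψ assigning false to every dispensable variable simultaneously. -/

import Mathlib

/-- A set of variables `X` is deselectable w.r.t. `ψ` if some model of `ψ`
assigns `false` to every variable in `X`. -/
def Deselectable {V : Type*} (ψ : Set (V → Bool)) (X : Set V) : Prop :=
  ∃ α ∈ ψ, ∀ v ∈ X, α v = false

/-- A variable `v` is dispensable w.r.t. `ψ` if every deselectable set stays
deselectable after adding `v`. -/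
def Dispensable {V : Type*} (ψ : Set (V → Bool)) (v : V) : Prop :=
  ∀ X : Set V, Deselectable ψ X → Deselectable ψ (X ∪ {v})

theorem deselectable_set_of_dispensables
    {V : Type*} [Finite V] (ψ : Set (V → Bool)) (hsat : ψ.Nonempty) :
    Deselectable ψ {v | Dispensable ψ v} := by
  have key : ∀ S : Set V, S.Finite → S ⊆ {v | Dispensable ψ v} → Deselectable ψ S := by
    intro S hS
    induction S, hS using Set.Finite.induction_on with
    | empty =>
      intro _
      obtain ⟨α, hα⟩ := hsat
      exact ⟨α, hα, fun v hv => hv.elim⟩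
    | @insert a s _ _ ih =>
      intro h
      have h1 : Dispensable ψ a := h (Set.mem_insert a s)
      have h2 := h1 s (ih fun x hx => h (Set.mem_insert_of_mem a hx))
      rwa [Set.union_singleton] at h2
  exact key _ (Set.toFinite _) subset_rfl
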